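/- arXiv:2412.21125 — 2 statements merged into one kernel-verified Lean document; each statement's English description precedes it below -/
import Mathlib

section
/- Let X be a nonempty finite subset of ℝⁿ, H a properly constrained hypothesis on X, and Φ : X → ℝᵐ a constraint for H. Then the dual e-class E_H^∨ = {x ↦ 1 − λ·Φ(x) : λ ∈ Λ_Φ}, where Λ_Φ = {λ ∈ ℝᵐ : max_{x∈X} λ·Φ(x) ≤ 1}, is the optimal e-class for H. -/
open MeasureTheory Set ENNReal

noncomputable section

/-- The (topological) support of a Borel measure: the set of points all of whose open
neighbourhoods have positive measure. -/
def msupport {α : Type*} [TopologicalSpace α] [MeasurableSpace α]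
    (P : Measure α) : Set α :=
  {x | ∀ U : Set α, IsOpen U → x ∈ U → 0 < P U}

variable {α : Type*} [TopologicalSpace α] [MeasurableSpace α] {X : Set α} {m : ℕ}

/-- A hypothesis on `X`: a nonempty set of Borel probability measures (on `X`,
identified with the Borel probability measures supported in `X`). -/
def IsHypothesis (H : Set (Measure X)) : Prop :=
  H.Nonempty ∧ ∀ P ∈ H, IsProbabilityMeasure P

/-- An e-variable with respect to `H`: a Borel measurable nonnegative function whose
expectation is at most one under every `P ∈ H`. -/
def IsEVar (H : Set (Measure X)) (E : X → ℝ) : Prop :=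
  Measurable E ∧ (∀ x, 0 ≤ E x) ∧ ∀ P ∈ H, ∫⁻ x, ENNReal.ofReal (E x) ∂P ≤ 1

/-- `f` majorises `g` if `f(x) ≥ g(x)` for every `x ∈ X`. -/
def Majorises (f g : X → ℝ) : Prop := ∀ x, g x ≤ f x

/-- A maximal e-variable: an e-variable with no strict majoriser among e-variables. -/
def IsMaximalEVar (H : Set (Measure X)) (E : X → ℝ) : Prop :=
  IsEVar H E ∧ ¬ ∃ E', IsEVar H E' ∧ Majorises E' E ∧ E' ≠ E

/-- A majorising e-class: an e-class such that every e-variable is majorised by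
one of its elements. -/
def IsMajorisingClass (H : Set (Measure X)) (C : Set (X → ℝ)) : Prop :=
  (∀ E ∈ C, IsEVar H E) ∧ ∀ E, IsEVar H E → ∃ E' ∈ C, Majorises E' E

/-- The optimal e-class: a majorising e-class contained in every majorising e-class. -/
def IsOptimalClass (H : Set (Measure X)) (C : Set (X → ℝ)) : Prop :=
  IsMajorisingClass H C ∧ ∀ C', IsMajorisingClass H C' → C ⊆ C'

/-- `P ∈ P_Φ`: the expectation of the ℓ¹-norm of `Φ` under `P` is finite. -/
def MemPPhi (P : Measure X) (Φ : X → Fin m → ℝ) : Prop :=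
  ∫⁻ x, ENNReal.ofReal (∑ i, |Φ x i|) ∂P < ⊤

/-- `Φ` is a constraint for `H`: `Φ` is continuous and `H` is exactly the set of Borel
probability measures `P ∈ P_Φ` with `⟨P, Φ⟩ = 0`. -/
def IsConstraint (H : Set (Measure X)) (Φ : X → Fin m → ℝ) : Prop :=
  Continuous Φ ∧
    H = {P : Measure X | IsProbabilityMeasure P ∧ MemPPhi P Φ ∧ ∫ x, Φ x ∂P = 0}

/-- A proper constraint: a constraint such that `0` lies in the relative interior
of the convex hull of the image of `Φ`. -/
def IsProperConstraint (H : Set (Measure X)) (Φ : X → Fin m → ℝ) : Prop :=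
  IsConstraint H Φ ∧
    (0 : Fin m → ℝ) ∈ intrinsicInterior ℝ (convexHull ℝ (Set.range Φ))

/-- A minimal constraint: a constraint such that `0` lies in the interior
of the convex hull of the image of `Φ`. -/
def IsMinimalConstraint (H : Set (Measure X)) (Φ : X → Fin m → ℝ) : Prop :=
  IsConstraint H Φ ∧
    (0 : Fin m → ℝ) ∈ interior (convexHull ℝ (Set.range Φ))

/-- A finitely constrained hypothesis: one admitting a constraint. -/
def FinitelyConstrained (H : Set (Measure X)) : Prop :=
  ∃ (m : ℕ) (Φ : X → Fin m → ℝ), IsConstraint H Φ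

/-- A properly constrained hypothesis: one admitting a proper constraint. -/
def ProperlyConstrained (H : Set (Measure X)) : Prop :=
  ∃ (m : ℕ) (Φ : X → Fin m → ℝ), IsProperConstraint H Φ

/-- `Λ_{Φ|S} = {λ ∈ ℝᵐ : sup_{x ∈ S} λ·Φ(x) ≤ 1}`. -/
def LambdaSet (Φ : X → Fin m → ℝ) (S : Set X) : Set (Fin m → ℝ) :=
  {l | ∀ x ∈ S, ∑ i, l i * Φ x i ≤ 1}

/-- The dual e-class `E_H^∨ = {1 - λ·Φ : λ ∈ Λ_Φ}`. -/
def dualClass (Φ : X → Fin m → ℝ) : Set (X → ℝ) :=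
  {E | ∃ l ∈ LambdaSet Φ Set.univ, E = fun x => 1 - ∑ i, l i * Φ x i}

/-- A matching set for `H`: a closed set that is exactly the support of some `P ∈ H`. -/
def IsMatchingSet (H : Set (Measure X)) (S : Set X) : Prop :=
  IsClosed S ∧ ∃ P ∈ H, msupport P = S

end

/-!
Mixing the uniform weights with a point of the convex hull slightly beyond `0` turns properness
into a `P ∈ H` charging every point of `X`. Every member of the dual class has expectation exactly
`1` under that `P`, so it is a maximal e-variable and hence belongs to every majorising class.
That the dual class is majorising is linear programming duality: `E ≤ 1 - λ·Φ` is a finite system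
of linear inequalities in `λ`, and by Farkas' lemma its infeasibility would be witnessed by a
probability vector `q` with `∑ q Φ = 0` and `∑ q E > 1`, that is, by some `P ∈ H` violating the
e-variable property.
-/

section Farkas

theorem exists_nonneg_sum_insert_smul_eq {R M ι : Type*} [Semiring R] [LE R]
    [AddCommMonoid M] [Module R M] [DecidableEq ι] {s : Finset ι} {j : ι} (hj : j ∉ s)
    (v : ι → M) {c : R} (hc : 0 ≤ c) {u : ι → R} (hu : ∀ i, 0 ≤ u i) :
    ∃ w : ι → R, (∀ i, 0 ≤ w i) ∧ ∑ i ∈ insert j s, w i • v i = c • v j + ∑ i ∈ s, u i • v i := by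
  refine ⟨Function.update u j c, fun i => ?_, ?_⟩
  · rcases eq_or_ne i j with rfl | hij
    · simpa using hc
    · simpa [hij] using hu i
  · rw [Finset.sum_insert hj, Function.update_self]
    refine congrArg _ (Finset.sum_congr rfl fun i hi => ?_)
    rw [Function.update_of_ne (ne_of_mem_of_not_mem hi hj)]

variable {𝕜 V ι : Type*} [Field 𝕜] [LinearOrder 𝕜] [IsStrictOrderedRing 𝕜]
  [AddCommGroup V] [Module 𝕜 V]

theorem exists_nonneg_sum_smul_eq_of_forall_nonpos (s : Finset ι) (f : ι → Module.Dual 𝕜 V)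
    (b : Module.Dual 𝕜 V) (h : ∀ x, (∀ i ∈ s, f i x ≤ 0) → b x ≤ 0) :
    ∃ u : ι → 𝕜, (∀ i, 0 ≤ u i) ∧ ∑ i ∈ s, u i • f i = b := by
  classical
  induction s using Finset.induction_on generalizing f b with
  | empty =>
    refine ⟨0, fun _ => le_rfl, LinearMap.ext fun x => le_antisymm ?_ (h x (by simp))⟩
    simpa using h (-x) (by simp)
  | insert j s hj ih =>
    suffices ∃ (c : 𝕜) (u : ι → 𝕜), 0 ≤ c ∧ (∀ i, 0 ≤ u i) ∧ c • f j + ∑ i ∈ s, u i • f i = b by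
      obtain ⟨c, u, hc, hu, rfl⟩ := this
      exact exists_nonneg_sum_insert_smul_eq hj f hc hu
    by_cases hs : ∀ x, (∀ i ∈ s, f i x ≤ 0) → b x ≤ 0
    · obtain ⟨u, hu, hb⟩ := ih f b hs
      exact ⟨0, u, le_rfl, hu, by simpa using hb⟩
    push Not at hs
    obtain ⟨y, hy, hby⟩ := hs
    have hjy : 0 < f j y := by
      by_contra! hjy
      exact hby.not_ge (h y ((Finset.forall_mem_insert _ _ _).2 ⟨hjy, hy⟩))
    -- Eliminate `f j` by composing all functionals with the projection onto `ker (f j)` along `y`.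
    let π : Module.End 𝕜 V := LinearMap.id - (f j).smulRight ((f j y)⁻¹ • y)
    have hπ (φ : Module.Dual 𝕜 V) (x : V) : φ (π x) = φ x - f j x * ((f j y)⁻¹ * φ y) := by
      simp [π]
    have hjπ (x : V) : f j (π x) = 0 := by
      rw [hπ, inv_mul_cancel₀ hjy.ne', mul_one, sub_self]
    obtain ⟨u, hu, hsum⟩ := ih (fun i => f i ∘ₗ π) (b ∘ₗ π) fun x hx =>
      h (π x) ((Finset.forall_mem_insert _ _ _).2 ⟨(hjπ x).le, hx⟩)
    have hbπ (x : V) : (∑ i ∈ s, u i • f i) (π x) = b (π x) := by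
      simpa using LinearMap.congr_fun hsum x
    have hnonpos : (∑ i ∈ s, u i • f i) y ≤ 0 := by
      simpa using Finset.sum_nonpos fun i hi => mul_nonpos_of_nonneg_of_nonpos (hu i) (hy i hi)
    refine ⟨(f j y)⁻¹ * (b y - (∑ i ∈ s, u i • f i) y), u,
      mul_nonneg (inv_nonneg.2 hjy.le) (by linarith), hu, LinearMap.ext fun x => ?_⟩
    have hbx := hbπ x
    rw [hπ, hπ] at hbx
    rw [LinearMap.add_apply, LinearMap.smul_apply, smul_eq_mul]
    linear_combination hbx

theorem exists_forall_le_of_forall_nonneg [Fintype ι] (f : ι → Module.Dual 𝕜 V) (g : ι → 𝕜)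
    (h : ∀ q : ι → 𝕜, (∀ i, 0 ≤ q i) → ∑ i, q i • f i = 0 → 0 ≤ ∑ i, q i * g i) :
    ∃ x, ∀ i, f i x ≤ g i := by
  by_contra! hinfeasible
  obtain ⟨q, hq, hsnd⟩ := exists_nonneg_sum_smul_eq_of_forall_nonpos Finset.univ
    (fun i => (f i).coprod (-g i • LinearMap.id)) (LinearMap.snd 𝕜 V 𝕜) <| by
      rintro ⟨x, t⟩ hxt
      by_contra! ht : 0 < t
      obtain ⟨i, hi⟩ := hinfeasible (t⁻¹ • x)
      have hle : f i x ≤ g i * t := by simpa using hxt i (Finset.mem_univ i)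
      rw [map_smul, smul_eq_mul, lt_inv_mul_iff₀ ht] at hi
      linarith
  have hqf : ∑ i, q i • f i = 0 := LinearMap.ext fun x => by
    simpa using LinearMap.congr_fun hsnd (x, 0)
  have hqg : -∑ i, q i * g i = 1 := by
    simpa using LinearMap.congr_fun hsnd (0, 1)
  linarith [h q hq hqf]

theorem exists_forall_le_of_forall_mem_stdSimplex [Fintype ι] (f : ι → Module.Dual 𝕜 V)
    (g : ι → 𝕜) (h : ∀ q ∈ stdSimplex 𝕜 ι, ∑ i, q i • f i = 0 → 0 ≤ ∑ i, q i * g i) :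
    ∃ x, ∀ i, f i x ≤ g i := by
  refine exists_forall_le_of_forall_nonneg f g fun q hq hqf => ?_
  rcases (Finset.sum_nonneg fun i _ => hq i).eq_or_lt with hsum | hsum
  · have hq0 : q = 0 := (Fintype.sum_eq_zero_iff_of_nonneg hq).1 hsum.symm
    simp [hq0]
  · have hmem : (∑ i, q i)⁻¹ • q ∈ stdSimplex 𝕜 ι :=
      ⟨fun i => mul_nonneg (inv_nonneg.2 hsum.le) (hq i), by
        simp [← Finset.mul_sum, inv_mul_cancel₀ hsum.ne']⟩
    have hnonneg := h _ hmem (by simp [mul_smul, ← Finset.smul_sum, hqf])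
    simp only [Pi.smul_apply, smul_eq_mul, mul_assoc, ← Finset.mul_sum] at hnonneg
    exact nonneg_of_mul_nonneg_right hnonneg (inv_pos.2 hsum)

end Farkas

section IntrinsicInterior

open Filter Topology

theorem eventually_lineMap_mem_of_mem_intrinsicInterior {𝕜 V P : Type*} [Ring 𝕜]
    [TopologicalSpace 𝕜] [AddCommGroup V] [Module 𝕜 V] [TopologicalSpace V]
    [ContinuousSMul 𝕜 V] [TopologicalSpace P] [AddTorsor V P] [IsTopologicalAddTorsor P]
    {s : Set P} {x y : P} (hx : x ∈ intrinsicInterior 𝕜 s) (hy : y ∈ affineSpan 𝕜 s) :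
    ∀ᶠ t in 𝓝 (0 : 𝕜), AffineMap.lineMap x y t ∈ s := by
  obtain ⟨x', hx', rfl⟩ := mem_intrinsicInterior.1 hx
  have hcont : Continuous fun t : 𝕜 =>
      (⟨AffineMap.lineMap (x' : P) y t, AffineMap.lineMap_mem t x'.2 hy⟩ : affineSpan 𝕜 s) :=
    AffineMap.lineMap_continuous.subtype_mk _
  filter_upwards [hcont.tendsto' 0 x' (by simp) |>.eventually (isOpen_interior.eventually_mem hx')]
    with t ht
  exact interior_subset (s := ((↑) ⁻¹' s : Set (affineSpan 𝕜 s))) ht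

theorem convexHull_range_eq_image_stdSimplex {𝕜 E ι : Type*} [Field 𝕜] [LinearOrder 𝕜]
    [IsStrictOrderedRing 𝕜] [AddCommGroup E] [Module 𝕜 E] [Fintype ι] (v : ι → E) :
    convexHull 𝕜 (range v) = Fintype.linearCombination 𝕜 v '' stdSimplex 𝕜 ι := by
  classical
  rw [← convexHull_rangle_single_eq_stdSimplex, LinearMap.image_convexHull, ← range_comp]
  congr 2
  ext i
  simp [Fintype.linearCombination_apply_single]

variable {E ι : Type*} [AddCommGroup E] [Module ℝ E] [TopologicalSpace E]
  [IsTopologicalAddGroup E] [ContinuousSMul ℝ E] [Fintype ι]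

theorem exists_pos_mem_stdSimplex_of_mem_intrinsicInterior_convexHull {v : ι → E} {x : E}
    (hx : x ∈ intrinsicInterior ℝ (convexHull ℝ (range v))) :
    ∃ q ∈ stdSimplex ℝ ι, (∀ i, 0 < q i) ∧ ∑ i, q i • v i = x := by
  have : Nonempty ι := range_nonempty_iff_nonempty.1 <|
    convexHull_nonempty_iff.1 ⟨x, intrinsicInterior_subset hx⟩
  obtain ⟨w, hw, hwpos⟩ : ∃ w ∈ stdSimplex ℝ ι, ∀ i, 0 < w i :=
    ⟨stdSimplex.barycenter.1, stdSimplex.barycenter.2, fun i => by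
      rw [stdSimplex.barycenter_apply]; positivity⟩
  have hb : Fintype.linearCombination ℝ v w ∈ convexHull ℝ (range v) :=
    convexHull_range_eq_image_stdSimplex (𝕜 := ℝ) v ▸ mem_image_of_mem _ hw
  -- Prolong the segment from `∑ i, w i • v i` to `x` slightly beyond `x`.
  have hev : ∀ᶠ t in 𝓝[<] (0 : ℝ),
      AffineMap.lineMap x (Fintype.linearCombination ℝ v w) t ∈ convexHull ℝ (range v) :=
    (eventually_lineMap_mem_of_mem_intrinsicInterior hx (subset_affineSpan ℝ _ hb)).filter_mono
      nhdsWithin_le_nhds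
  obtain ⟨t, ht, ht0 : t < 0⟩ := (hev.and self_mem_nhdsWithin).exists
  rw [convexHull_range_eq_image_stdSimplex] at ht
  obtain ⟨r, hr, hrt⟩ := ht
  have h1t : 0 < 1 - t := by linarith
  have ha : 0 ≤ (1 - t)⁻¹ := by positivity
  have hc : 0 < -t * (1 - t)⁻¹ := mul_pos (by linarith) (by positivity)
  refine ⟨(1 - t)⁻¹ • r + (-t * (1 - t)⁻¹) • w,
    convex_stdSimplex ℝ ι hr hw ha hc.le (by field_simp; ring), fun i => ?_, ?_⟩
  · exact add_pos_of_nonneg_of_pos (mul_nonneg ha (hr.1 i)) (mul_pos hc (hwpos i))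
  · rw [← Fintype.linearCombination_apply, map_add, map_smul, map_smul, hrt,
      AffineMap.lineMap_apply_module, ← sub_eq_zero]
    match_scalars <;> field_simp <;> ring

end IntrinsicInterior

theorem exists_isProbabilityMeasure_real_singleton_eq {Ω : Type*} [MeasurableSpace Ω]
    [MeasurableSingletonClass Ω] [Fintype Ω] {q : Ω → ℝ} (hq : q ∈ stdSimplex ℝ Ω) :
    ∃ P : Measure Ω, IsProbabilityMeasure P ∧ ∀ x, P.real {x} = q x := by
  have hsum : ∑ x, ENNReal.ofReal (q x) = 1 := by
    rw [← ENNReal.ofReal_sum_of_nonneg fun x _ => hq.1 x, hq.2, ENNReal.ofReal_one]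
  refine ⟨(PMF.ofFintype _ hsum).toMeasure, inferInstance, fun x => ?_⟩
  rw [Measure.real, PMF.toMeasure_apply_singleton _ _ (measurableSet_singleton x),
    PMF.ofFintype_apply, ENNReal.toReal_ofReal (hq.1 x)]

theorem integral_one_sub_sum_mul_eq_one {Ω ι : Type*} [MeasurableSpace Ω] [Fintype ι]
    {P : Measure Ω} [IsProbabilityMeasure P] {Φ : Ω → ι → ℝ} (hint : Integrable Φ P)
    (hmean : ∫ x, Φ x ∂P = 0) (l : ι → ℝ) : ∫ x, 1 - ∑ i, l i * Φ x i ∂P = 1 := by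
  have hmul (i : ι) : Integrable (fun x => l i * Φ x i) P := (hint.eval i).const_mul _
  rw [integral_sub (integrable_const 1) (integrable_finsetSum _ fun i _ => hmul i),
    integral_finsetSum _ fun i _ => hmul i]
  simp [integral_const_mul, ← eval_integral hint.eval, hmean]

section EVariable

variable {α : Type*} {X : Set α} {m : ℕ} {C : Set (X → ℝ)} {E : X → ℝ} {Φ : X → Fin m → ℝ}

theorem nonneg_of_mem_dualClass (hE : E ∈ dualClass Φ) (x : X) : 0 ≤ E x := by
  obtain ⟨l, hl, rfl⟩ := hE
  exact sub_nonneg.2 (hl x (mem_univ x))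

variable [MeasurableSpace α] {H : Set (Measure X)} {P : Measure X}

theorem IsEVar.integral_le_one (hE : IsEVar H E) (hP : P ∈ H) : ∫ x, E x ∂P ≤ 1 := by
  rw [integral_eq_lintegral_of_nonneg_ae (.of_forall hE.2.1) hE.1.aestronglyMeasurable]
  exact ENNReal.toReal_le_of_le_ofReal zero_le_one (by simpa using hE.2.2 P hP)

theorem IsEVar.isMaximalEVar_of_lintegral_eq_one (hE : IsEVar H E) (hP : P ∈ H)
    (hpos : ∀ x, P {x} ≠ 0) (hone : ∫⁻ x, ENNReal.ofReal (E x) ∂P = 1) :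
    IsMaximalEVar H E := by
  refine ⟨hE, fun ⟨E', hE', hmaj, hne⟩ => hne (funext fun x => ?_)⟩
  have hae : (fun x => ENNReal.ofReal (E x)) =ᵐ[P] fun x => ENNReal.ofReal (E' x) :=
    ae_eq_of_ae_le_of_lintegral_le (.of_forall fun x => ENNReal.ofReal_le_ofReal (hmaj x))
      (by simp [hone]) hE'.1.ennreal_ofReal.aemeasurable (hone ▸ hE'.2.2 P hP)
  have heq : ENNReal.ofReal (E x) = ENNReal.ofReal (E' x) := by
    by_contra hx
    exact hpos x (measure_mono_null (singleton_subset_iff.2 hx) hae)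
  exact ((ENNReal.ofReal_eq_ofReal_iff (hE.2.1 x) (hE'.2.1 x)).1 heq).symm

theorem IsMaximalEVar.mem_of_isMajorisingClass (hE : IsMaximalEVar H E)
    (hC : IsMajorisingClass H C) : E ∈ C := by
  obtain ⟨E', hE', hmaj⟩ := hC.2 E hE.1
  by_contra hEC
  exact hE.2 ⟨E', hC.1 E' hE', hmaj, fun h => hEC (h ▸ hE')⟩

variable [TopologicalSpace α]

theorem IsConstraint.integrable [OpensMeasurableSpace α] (hΦ : IsConstraint H Φ) (hP : P ∈ H) :
    Integrable Φ P := by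
  rw [hΦ.2] at hP
  obtain ⟨-, hfin, -⟩ := hP
  have hΦc := hΦ.1
  have hsum : Integrable (fun x => ∑ i, |Φ x i|) P :=
    (lintegral_ofReal_ne_top_iff_integrable
      (by fun_prop : Continuous fun x => ∑ i, |Φ x i|).aestronglyMeasurable
      (.of_forall fun x => by positivity)).1 hfin.ne
  refine hsum.mono' hΦc.aestronglyMeasurable (.of_forall fun x => ?_)
  refine (pi_norm_le_iff_of_nonneg (by positivity)).2 fun i => ?_
  exact Finset.single_le_sum (f := fun i => |Φ x i|) (fun j _ => abs_nonneg _) (Finset.mem_univ i)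

theorem IsConstraint.lintegral_eq_one_of_mem_dualClass [OpensMeasurableSpace α]
    (hΦ : IsConstraint H Φ) (hE : E ∈ dualClass Φ) (hP : P ∈ H) :
    ∫⁻ x, ENNReal.ofReal (E x) ∂P = 1 := by
  have hE0 := nonneg_of_mem_dualClass hE
  obtain ⟨l, -, rfl⟩ := hE
  obtain ⟨hprob, -, hmean⟩ := hΦ.2 ▸ hP
  have hone := integral_one_sub_sum_mul_eq_one (hΦ.integrable hP) hmean l
  rw [← ofReal_integral_eq_lintegral_ofReal (integrable_of_integral_eq_one hone) (.of_forall hE0),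
    hone, ENNReal.ofReal_one]

theorem IsConstraint.isEVar_of_mem_dualClass [OpensMeasurableSpace α] (hΦ : IsConstraint H Φ)
    (hE : E ∈ dualClass Φ) : IsEVar H E := by
  refine ⟨?_, nonneg_of_mem_dualClass hE,
    fun P hP => (hΦ.lintegral_eq_one_of_mem_dualClass hE hP).le⟩
  obtain ⟨l, -, rfl⟩ := hE
  have hΦc := hΦ.1
  exact (by fun_prop : Continuous fun x => 1 - ∑ i, l i * Φ x i).measurable

theorem IsConstraint.exists_mem_real_singleton_eq [Fintype X] [MeasurableSingletonClass X]
    (hΦ : IsConstraint H Φ) {q : X → ℝ} (hq : q ∈ stdSimplex ℝ X) (hmean : ∑ x, q x • Φ x = 0) :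
    ∃ P ∈ H, ∀ x, P.real {x} = q x := by
  obtain ⟨P, hprob, hPq⟩ := exists_isProbabilityMeasure_real_singleton_eq hq
  refine ⟨P, ?_, hPq⟩
  rw [hΦ.2]
  refine ⟨hprob, (Integrable.of_finite (μ := P)).lintegral_lt_top, ?_⟩
  simpa only [integral_fintype Integrable.of_finite, hPq] using hmean

theorem IsProperConstraint.exists_mem_forall_singleton_ne_zero [Finite X]
    [MeasurableSingletonClass X] (hΦ : IsProperConstraint H Φ) : ∃ P ∈ H, ∀ x, P {x} ≠ 0 := by
  have := Fintype.ofFinite X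
  obtain ⟨q, hq, hpos, hmean⟩ := exists_pos_mem_stdSimplex_of_mem_intrinsicInterior_convexHull hΦ.2
  obtain ⟨P, hP, hPq⟩ := hΦ.1.exists_mem_real_singleton_eq hq hmean
  refine ⟨P, hP, fun x hx => (hpos x).ne' ?_⟩
  rw [← hPq, Measure.real, hx, ENNReal.toReal_zero]

theorem IsConstraint.exists_mem_dualClass_majorises [Finite X] [MeasurableSingletonClass X]
    (hΦ : IsConstraint H Φ) (hE : IsEVar H E) : ∃ E' ∈ dualClass Φ, Majorises E' E := by
  have := Fintype.ofFinite X
  obtain ⟨l, hl⟩ : ∃ l, ∀ x, dotProductEquiv ℝ (Fin m) (Φ x) l ≤ 1 - E x := by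
    refine exists_forall_le_of_forall_mem_stdSimplex _ _ fun q hq hqΦ => ?_
    simp only [← map_smul, ← map_sum, EmbeddingLike.map_eq_zero_iff] at hqΦ
    obtain ⟨P, hP, hPq⟩ := hΦ.exists_mem_real_singleton_eq hq hqΦ
    have : IsProbabilityMeasure P := (hΦ.2 ▸ hP).1
    have hle := hE.integral_le_one hP
    simp only [integral_fintype Integrable.of_finite, hPq, smul_eq_mul] at hle
    simpa [mul_sub, hq.2] using hle
  have hdual (x : X) : ∑ i, l i * Φ x i ≤ 1 - E x := by
    simpa [dotProduct, mul_comm] using hl x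
  exact ⟨_, ⟨l, fun x _ => by linarith [hdual x, hE.2.1 x], rfl⟩,
    fun x => le_sub_comm.1 (hdual x)⟩

theorem IsConstraint.isMajorisingClass_dualClass [Finite X] [MeasurableSingletonClass X]
    [OpensMeasurableSpace α] (hΦ : IsConstraint H Φ) : IsMajorisingClass H (dualClass Φ) :=
  ⟨fun _ => hΦ.isEVar_of_mem_dualClass, fun _ => hΦ.exists_mem_dualClass_majorises⟩

theorem IsConstraint.isMaximalEVar_of_mem_dualClass [OpensMeasurableSpace α]
    (hΦ : IsConstraint H Φ) (hP : P ∈ H) (hpos : ∀ x, P {x} ≠ 0) (hE : E ∈ dualClass Φ) :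
    IsMaximalEVar H E :=
  (hΦ.isEVar_of_mem_dualClass hE).isMaximalEVar_of_lintegral_eq_one hP hpos
    (hΦ.lintegral_eq_one_of_mem_dualClass hE hP)

theorem statement14_general [T1Space α] [OpensMeasurableSpace α] [Finite X]
    (hpc : ProperlyConstrained H) (hΦ : IsConstraint H Φ) : IsOptimalClass H (dualClass Φ) := by
  obtain ⟨m', Ψ, hΨ⟩ := hpc
  obtain ⟨P, hP, hpos⟩ := hΨ.exists_mem_forall_singleton_ne_zero
  exact ⟨hΦ.isMajorisingClass_dualClass, fun C hC E hE =>
    (hΦ.isMaximalEVar_of_mem_dualClass hP hpos hE).mem_of_isMajorisingClass hC⟩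

end EVariable

/-- for a properly constrained hypothesis on a nonempty finite `X`,
the dual e-class is the optimal e-class. -/
theorem statement14 {n m : ℕ} {X : Set (EuclideanSpace ℝ (Fin n))}
    (hXf : X.Finite) (hXne : X.Nonempty)
    (H : Set (Measure X)) (hHne : H.Nonempty) (hpc : ProperlyConstrained H)
    (Φ : X → Fin m → ℝ) (hΦ : IsConstraint H Φ) :
    IsOptimalClass H (dualClass Φ) := by
  have : Finite X := hXf.to_subtype
  exact statement14_general hpc hΦ
end

section
/- Let X be a nonempty closed subset of ℝⁿ and H a properly constrained hypothesis on X. Then any finite union of matching sets for H is a matching set for H, and every finite subset of X is contained in a finite matching set for H. -/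
open MeasureTheory Set ENNReal

/-!
If `P` and `Q` belong to `H`, so does any nondegenerate mixture of them, and its support is the
union of the two supports; this gives unions. For a point `x`, since `0` is in the relative interior
of the convex hull of `Φ(X)`, the segment from `Φ x` to `0` can be prolonged slightly beyond `0` to
some `y` still in the hull. Now `y` is the mean of `Φ` under a finitely supported probability
measure, and mixing that measure with the Dirac mass at `x` yields a finitely supported element of
`H` charging `x`.
-/

open scoped Topology

section IntrinsicInterior

variable {V : Type*} [AddCommGroup V] [Module ℝ V] [TopologicalSpace V]
  [IsTopologicalAddGroup V] [ContinuousSMul ℝ V]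

lemma exists_mem_openSegment_of_mem_intrinsicInterior {s : Set V} {x z : V}
    (hz : z ∈ intrinsicInterior ℝ s) (hx : x ∈ s) : ∃ y ∈ s, z ∈ openSegment ℝ x y := by
  have hxA : x ∈ affineSpan ℝ s := subset_affineSpan ℝ s hx
  have hzA : z ∈ affineSpan ℝ s := subset_affineSpan ℝ s (intrinsicInterior_subset hz)
  let g : ℝ → affineSpan ℝ s := fun t ↦
    ⟨AffineMap.lineMap x z t, AffineMap.lineMap_mem t hxA hzA⟩
  have hg : Continuous g := AffineMap.lineMap_continuous.subtype_mk _
  have hg1 : ((↑) ⁻¹' s : Set (affineSpan ℝ s)) ∈ 𝓝 (g 1) := by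
    obtain ⟨z', hz', rfl⟩ := mem_intrinsicInterior.1 hz
    simpa [g] using mem_interior_iff_mem_nhds.1 hz'
  obtain ⟨t, hts, ht⟩ : ∃ t, AffineMap.lineMap x z t ∈ s ∧ (1 : ℝ) < t :=
    (((hg.tendsto 1).eventually hg1).filter_mono nhdsWithin_le_nhds |>.and
      (self_mem_nhdsWithin (s := Ioi 1))).exists
  have ht0 : 0 < t := zero_lt_one.trans ht
  refine ⟨AffineMap.lineMap x z t, hts, ?_⟩
  rw [openSegment_eq_image_lineMap]
  refine ⟨t⁻¹, ⟨inv_pos.2 ht0, inv_lt_one_of_one_lt₀ ht⟩, ?_⟩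
  rw [AffineMap.lineMap_lineMap_right, inv_mul_cancel₀ ht0.ne', AffineMap.lineMap_apply_one]

end IntrinsicInterior

section Support

variable {Y : Type*} [TopologicalSpace Y] [MeasurableSpace Y]

lemma msupport_eq_support (P : Measure Y) : msupport P = P.support := by
  rw [Measure.support_eq_forall_isOpen]
  ext x
  simp only [msupport, mem_ofPred_eq]
  exact forall_congr' fun U ↦ forall_comm

lemma support_smul_measure (P : Measure Y) {c : ℝ≥0∞} (hc : c ≠ 0) :
    (c • P).support = P.support :=
  Measure.smul_absolutelyContinuous.support_mono.antisymm
    (Measure.absolutelyContinuous_smul hc).support_mono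

lemma support_dirac [T1Space Y] [OpensMeasurableSpace Y] (x : Y) :
    (Measure.dirac x).support = {x} := by
  refine (Measure.support_subset_of_isClosed isClosed_singleton (by simp)).antisymm ?_
  refine singleton_subset_iff.2 ((Measure.mem_support_iff_forall x).2 fun U hU ↦ ?_)
  simp [Measure.dirac_apply_of_mem (mem_of_mem_nhds hU)]

end Support

section HasMean

variable {Y : Type*} [MeasurableSpace Y] {E : Type*} [NormedAddCommGroup E] [NormedSpace ℝ E]

/-- `P` is a probability measure under which `Φ` is integrable with expectation `y`. Integrability
is bundled because the Bochner integral of a non-integrable function is `0` by convention. -/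
structure HasMean (Φ : Y → E) (P : Measure Y) (y : E) : Prop where
  isProbabilityMeasure : IsProbabilityMeasure P
  integrable : Integrable Φ P
  integral_eq : ∫ x, Φ x ∂P = y

lemma hasMean_dirac [MeasurableSingletonClass Y] [CompleteSpace E] (Φ : Y → E) (x : Y) :
    HasMean Φ (Measure.dirac x) (Φ x) :=
  ⟨inferInstance, integrable_dirac enorm_lt_top, integral_dirac Φ x⟩

variable {Φ : Y → E} {P Q : Measure Y} {y z w : E}

lemma HasMean.convexCombination (hP : HasMean Φ P y) (hQ : HasMean Φ Q z) {a b : ℝ}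
    (ha : 0 ≤ a) (hb : 0 ≤ b) (hab : a + b = 1) :
    HasMean Φ (ENNReal.ofReal a • P + ENNReal.ofReal b • Q) (a • y + b • z) where
  isProbabilityMeasure := by
    have := hP.isProbabilityMeasure
    have := hQ.isProbabilityMeasure
    exact ⟨by simp [← ENNReal.ofReal_add ha hb, hab]⟩
  integrable := (hP.integrable.smul_measure ENNReal.ofReal_ne_top).add_measure
    (hQ.integrable.smul_measure ENNReal.ofReal_ne_top)
  integral_eq := by
    rw [integral_add_measure (hP.integrable.smul_measure ENNReal.ofReal_ne_top)
        (hQ.integrable.smul_measure ENNReal.ofReal_ne_top),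
      integral_smul_measure, integral_smul_measure, hP.integral_eq, hQ.integral_eq,
      ENNReal.toReal_ofReal ha, ENNReal.toReal_ofReal hb]

variable [TopologicalSpace Y]

lemma HasMean.exists_support_eq_union (hP : HasMean Φ P y) (hQ : HasMean Φ Q z)
    (hw : w ∈ openSegment ℝ y z) :
    ∃ R : Measure Y, HasMean Φ R w ∧ R.support = P.support ∪ Q.support := by
  obtain ⟨a, b, ha, hb, hab, rfl⟩ := hw
  refine ⟨_, hP.convexCombination hQ ha.le hb.le hab, ?_⟩
  rw [Measure.support_add, support_smul_measure P (ENNReal.ofReal_pos.2 ha).ne',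
    support_smul_measure Q (ENNReal.ofReal_pos.2 hb).ne']

variable [T1Space Y] [OpensMeasurableSpace Y] [CompleteSpace E]

lemma exists_hasMean_finite_support (hy : y ∈ convexHull ℝ (range Φ)) :
    ∃ P : Measure Y, HasMean Φ P y ∧ P.support.Finite := by
  refine convexHull_min (t := {y | ∃ P : Measure Y, HasMean Φ P y ∧ P.support.Finite}) ?_ ?_ hy
  · rintro _ ⟨x, rfl⟩
    exact ⟨_, hasMean_dirac Φ x, support_dirac x ▸ finite_singleton x⟩
  · rw [convex_iff_openSegment_subset]
    rintro u ⟨P, hP, hPfin⟩ v ⟨Q, hQ, hQfin⟩ w hw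
    obtain ⟨R, hR, hRsupp⟩ := hP.exists_support_eq_union hQ hw
    exact ⟨R, hR, hRsupp ▸ hPfin.union hQfin⟩

lemma exists_hasMean_finite_support_mem
    (hy : y ∈ intrinsicInterior ℝ (convexHull ℝ (range Φ))) (x : Y) :
    ∃ P : Measure Y, HasMean Φ P y ∧ P.support.Finite ∧ x ∈ P.support := by
  obtain ⟨z, hz, hyz⟩ := exists_mem_openSegment_of_mem_intrinsicInterior hy
    (subset_convexHull ℝ _ (mem_range_self x))
  obtain ⟨Q, hQ, hQfin⟩ := exists_hasMean_finite_support hz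
  obtain ⟨P, hP, hPsupp⟩ := (hasMean_dirac Φ x).exists_support_eq_union hQ hyz
  rw [support_dirac, singleton_union] at hPsupp
  exact ⟨P, hP, hPsupp ▸ hQfin.insert x, hPsupp ▸ mem_insert x _⟩

end HasMean

section MatchingSet

variable {α : Type*} [MeasurableSpace α] {X : Set α} {m : ℕ}
  {Φ : X → Fin m → ℝ} {H : Set (Measure X)}

lemma memPPhi_iff_integrable {P : Measure X} (hΦ : AEStronglyMeasurable Φ P) :
    MemPPhi P Φ ↔ Integrable Φ P := by
  have hfinite : MemPPhi P Φ ↔ HasFiniteIntegral (fun x ↦ WithLp.toLp 1 (Φ x)) P := by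
    simp only [MemPPhi, hasFiniteIntegral_iff_norm, PiLp.norm_eq_of_L1, Real.norm_eq_abs]
  have hmeas : AEStronglyMeasurable (fun x ↦ WithLp.toLp 1 (Φ x)) P :=
    (PiLp.continuous_toLp 1 _).comp_aestronglyMeasurable hΦ
  rw [hfinite, integrable_pi_iff, ← integrable_piLp_iff (q := 1) (f := fun x ↦ WithLp.toLp 1 (Φ x))]
  exact (and_iff_right hmeas).symm

variable [TopologicalSpace α]

lemma ProperlyConstrained.finitelyConstrained (hH : ProperlyConstrained H) :
    FinitelyConstrained H :=
  let ⟨m, Φ, hΦ⟩ := hH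
  ⟨m, Φ, hΦ.1⟩

lemma ProperlyConstrained.nonempty (hH : ProperlyConstrained H) : Nonempty X := by
  obtain ⟨m, Φ, -, h0⟩ := hH
  exact range_nonempty_iff_nonempty.1 (convexHull_nonempty_iff.1 ⟨0, intrinsicInterior_subset h0⟩)

variable [OpensMeasurableSpace α]

lemma IsConstraint.mem_iff_hasMean (hΦ : IsConstraint H Φ) {P : Measure X} :
    P ∈ H ↔ HasMean Φ P 0 := by
  rw [hΦ.2, mem_ofPred_eq, memPPhi_iff_integrable hΦ.1.aestronglyMeasurable]
  exact ⟨fun ⟨h₁, h₂, h₃⟩ ↦ ⟨h₁, h₂, h₃⟩, fun ⟨h₁, h₂, h₃⟩ ↦ ⟨h₁, h₂, h₃⟩⟩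

lemma IsConstraint.isMatchingSet_iff (hΦ : IsConstraint H Φ) {S : Set X} :
    IsMatchingSet H S ↔ ∃ P : Measure X, HasMean Φ P 0 ∧ P.support = S := by
  simp only [IsMatchingSet, hΦ.mem_iff_hasMean, msupport_eq_support]
  refine and_iff_right_of_imp ?_
  rintro ⟨P, -, rfl⟩
  exact Measure.isClosed_support

lemma FinitelyConstrained.supClosed_isMatchingSet (hH : FinitelyConstrained H) :
    SupClosed {S | IsMatchingSet H S} := by
  obtain ⟨m, Φ, hΦ⟩ := hH
  intro S hS T hT
  obtain ⟨P, hP, rfl⟩ := hΦ.isMatchingSet_iff.1 hS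
  obtain ⟨Q, hQ, rfl⟩ := hΦ.isMatchingSet_iff.1 hT
  exact hΦ.isMatchingSet_iff.2 (hP.exists_support_eq_union hQ (by simp))

variable [T1Space α]

lemma ProperlyConstrained.exists_finite_isMatchingSet_mem (hH : ProperlyConstrained H) (x : X) :
    ∃ S : Set X, IsMatchingSet H S ∧ S.Finite ∧ x ∈ S := by
  obtain ⟨m, Φ, hΦ, h0⟩ := hH
  obtain ⟨P, hP, hfin, hx⟩ := exists_hasMean_finite_support_mem h0 x
  exact ⟨P.support, hΦ.isMatchingSet_iff.2 ⟨P, hP, rfl⟩, hfin, hx⟩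

lemma ProperlyConstrained.exists_finite_isMatchingSet_superset (hH : ProperlyConstrained H)
    {F : Set X} (hF : F.Finite) : ∃ S : Set X, IsMatchingSet H S ∧ S.Finite ∧ F ⊆ S := by
  obtain ⟨x₀⟩ := hH.nonempty
  choose T hT hTfin hxT using hH.exists_finite_isMatchingSet_mem
  have hF₀ : (insert x₀ F).Finite := hF.insert x₀
  refine ⟨⋃ x ∈ insert x₀ F, T x, ?_, hF₀.biUnion fun x _ ↦ hTfin x, fun x hx ↦ ?_⟩
  · exact hH.finitelyConstrained.supClosed_isMatchingSet.biSup_mem_of_nonempty hF₀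
      (insert_nonempty x₀ F) fun x _ ↦ hT x
  · exact mem_biUnion (mem_insert_of_mem x₀ hx) (hxT x)

theorem statement16_general (hH : ProperlyConstrained H) :
    (∀ (ι : Type*) [Finite ι] [Nonempty ι] (S : ι → Set X), (∀ i, IsMatchingSet H (S i)) →
        IsMatchingSet H (⋃ i, S i)) ∧
    (∀ F : Set X, F.Finite → ∃ S : Set X, IsMatchingSet H S ∧ S.Finite ∧ F ⊆ S) :=
  ⟨fun _ _ _ _ hS ↦ hH.finitelyConstrained.supClosed_isMatchingSet.iSup_mem_of_nonempty hS,
    fun _ hF ↦ hH.exists_finite_isMatchingSet_superset hF⟩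

end MatchingSet

/-- for a properly constrained hypothesis, a finite (nonempty) union of
matching sets is a matching set, and every finite subset of `X` is contained in a finite
matching set. -/
theorem statement16 {n : ℕ} {X : Set (EuclideanSpace ℝ (Fin n))}
    (hXc : IsClosed X) (hXne : X.Nonempty)
    (H : Set (Measure X)) (hHne : H.Nonempty) (hpc : ProperlyConstrained H) :
    (∀ (k : ℕ) (S : Fin (k + 1) → Set X), (∀ i, IsMatchingSet H (S i)) →
        IsMatchingSet H (⋃ i, S i)) ∧
    (∀ F : Set X, F.Finite → ∃ S : Set X, IsMatchingSet H S ∧ S.Finite ∧ F ⊆ S) := by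
  obtain ⟨hUnion, hFinite⟩ := statement16_general hpc
  exact ⟨fun k ↦ hUnion (Fin (k + 1)), hFinite⟩
end
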